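/- Let r, s : [0,∞) → ℝ be continuously differentiable and u : [0,∞) → ℝ continuous, with ṡ(t) = −2u(t)r(t), ṙ(t) = −2u(t)s(t), and s(t) > r(t) > 0 for all t ≥ 0. Set C = √(s(0)² − r(0)²) > 0. Then s(t)² − r(t)² = C² for all t ≥ 0, and the modification function m(t) = ((s(t) − C)/r(t))², which equals exp(−2·arccosh(s(t)/r(t))), satisfies ṁ(t)/m(t) = −4C·u(t)/r(t); equivalently m(t) = m(0) · exp(−4C ∫_0^t u(τ)/r(τ) dτ) for all t ≥ 0. -/

import Mathlib

/-- The inverse hyperbolic cosine, arccosh(y) = log(y + √(y² − 1)) (for y ≥ 1). -/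
noncomputable def arccosh (y : ℝ) : ℝ := Real.log (y + Real.sqrt (y ^ 2 - 1))

/-!
The Lax system conserves `s² − r² = C²`, so `s / r = cosh θ` and `C / r = sinh θ` with
`θ = arccosh (s / r)`, and `q = (s − C) / r` is `exp (-θ)`. The conservation law also turns the
quotient rule for `q` into the scalar linear equation `q' = -2C (u / r) q`; hence `m = q²` has
logarithmic derivative `-4C u / r`, which is integrated.
-/

open Set Real MeasureTheory

theorem exp_neg_arcosh {x : ℝ} (hx : 1 ≤ x) : exp (-arcosh x) = x - √(x ^ 2 - 1) := by
  rw [← cosh_sub_sinh, cosh_arcosh hx, sinh_arcosh hx]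

theorem sqrt_div_sq_sub_one_eq_div {r s C : ℝ} (hr : 0 < r) (hC : 0 ≤ C)
    (h : s ^ 2 - r ^ 2 = C ^ 2) : √((s / r) ^ 2 - 1) = C / r := by
  have hsq : (s / r) ^ 2 - 1 = (C / r) ^ 2 := by
    field_simp
    exact h
  rw [hsq, sqrt_sq (by positivity)]

theorem sub_div_sq_eq_exp_neg_two_mul_arccosh {r s C : ℝ} (hr : 0 < r) (hrs : r ≤ s)
    (hC : 0 ≤ C) (h : s ^ 2 - r ^ 2 = C ^ 2) :
    ((s - C) / r) ^ 2 = exp (-2 * arccosh (s / r)) := by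
  have hexp : exp (-arccosh (s / r)) = (s - C) / r := by
    rw [show arccosh = arcosh from rfl, exp_neg_arcosh ((one_le_div hr).2 hrs),
      sqrt_div_sq_sub_one_eq_div hr hC h, sub_div]
  rw [← hexp, ← exp_nat_mul, Nat.cast_ofNat, mul_neg, neg_mul]

theorem sq_sub_sq_eq_of_hasDerivWithinAt {r s u : ℝ → ℝ} {I : Set ℝ} (hI : Convex ℝ I)
    (hs : ∀ t ∈ I, HasDerivWithinAt s (-2 * u t * r t) I t)
    (hr : ∀ t ∈ I, HasDerivWithinAt r (-2 * u t * s t) I t) {a b : ℝ} (ha : a ∈ I) (hb : b ∈ I) :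
    s b ^ 2 - r b ^ 2 = s a ^ 2 - r a ^ 2 := by
  have hderiv : ∀ t ∈ I, HasDerivWithinAt (fun τ => s τ ^ 2 - r τ ^ 2) 0 I t := fun t ht =>
    (((hs t ht).pow 2).sub ((hr t ht).pow 2)).congr_deriv (by ring)
  have hbound := hI.norm_image_sub_le_of_norm_hasDerivWithin_le hderiv
    (fun _ _ => norm_zero.le) ha hb
  rw [zero_mul, norm_le_zero_iff] at hbound
  exact sub_eq_zero.1 hbound

theorem hasDerivAt_sub_const_div {𝕜 : Type*} [NontriviallyNormedField 𝕜] {r s : 𝕜 → 𝕜}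
    {u C t : 𝕜} (hs : HasDerivAt s (-2 * u * r t) t) (hr : HasDerivAt r (-2 * u * s t) t)
    (hrt : r t ≠ 0) (h : s t ^ 2 - r t ^ 2 = C ^ 2) :
    HasDerivAt (fun τ => (s τ - C) / r τ) (-2 * C * (u / r t) * ((s t - C) / r t)) t := by
  refine ((hs.sub_const C).div hr hrt).congr_deriv ?_
  field_simp
  linear_combination (2 * u) * h

theorem hasDerivAt_sub_const_div_sq {𝕜 : Type*} [NontriviallyNormedField 𝕜] {r s : 𝕜 → 𝕜}
    {u C t : 𝕜} (hs : HasDerivAt s (-2 * u * r t) t) (hr : HasDerivAt r (-2 * u * s t) t)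
    (hrt : r t ≠ 0) (h : s t ^ 2 - r t ^ 2 = C ^ 2) :
    HasDerivAt (fun τ => ((s τ - C) / r τ) ^ 2)
      (-4 * C * (u / r t) * ((s t - C) / r t) ^ 2) t :=
  ((hasDerivAt_sub_const_div hs hr hrt h).pow 2).congr_deriv (by ring)

theorem eq_mul_exp_integral_of_hasDerivAt {f g : ℝ → ℝ} {a b : ℝ}
    (hf : ∀ t ∈ uIcc a b, HasDerivAt f (g t * f t) t) (hpos : ∀ t ∈ uIcc a b, 0 < f t)
    (hg : IntervalIntegrable g volume a b) : f b = f a * exp (∫ t in a..b, g t) := by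
  have hlog : ∀ t ∈ uIcc a b, HasDerivAt (fun τ => log (f τ)) (g t) t := fun t ht =>
    ((hf t ht).log (hpos t ht).ne').congr_deriv (mul_div_cancel_right₀ _ (hpos t ht).ne')
  have ha := hpos a left_mem_uIcc
  rw [intervalIntegral.integral_eq_sub_of_hasDerivAt hlog hg, exp_sub,
    exp_log (hpos b right_mem_uIcc), exp_log ha, mul_div_cancel₀ _ ha.ne']

theorem sub_div_sq_pos {𝕜 : Type*} [Field 𝕜] [LinearOrder 𝕜] [IsStrictOrderedRing 𝕜]
    {r s C : 𝕜} (hr : r ≠ 0) (h : s ^ 2 - r ^ 2 = C ^ 2) :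
    0 < ((s - C) / r) ^ 2 := by
  have hsC : s - C ≠ 0 := by
    intro hsC
    have hr_sq : r ^ 2 = 0 := by linear_combination (s + C) * hsC - h
    exact pow_ne_zero 2 hr hr_sq
  positivity

theorem sub_div_sq_eq_mul_exp_integral {r s u : ℝ → ℝ} {a b C : ℝ}
    (hs : ∀ t ∈ uIcc a b, HasDerivAt s (-2 * u t * r t) t)
    (hr : ∀ t ∈ uIcc a b, HasDerivAt r (-2 * u t * s t) t)
    (hu : IntervalIntegrable u volume a b) (hr₀ : ∀ t ∈ uIcc a b, r t ≠ 0)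
    (h : ∀ t ∈ uIcc a b, s t ^ 2 - r t ^ 2 = C ^ 2) :
    ((s b - C) / r b) ^ 2
      = ((s a - C) / r a) ^ 2 * exp (-4 * C * ∫ t in a..b, u t / r t) := by
  have hur : IntervalIntegrable (fun t => u t / r t) volume a b :=
    hu.mul_continuousOn ((HasDerivAt.continuousOn hr).inv₀ hr₀)
  rw [← intervalIntegral.integral_const_mul]
  exact eq_mul_exp_integral_of_hasDerivAt
    (f := fun t => ((s t - C) / r t) ^ 2) (g := fun t => -4 * C * (u t / r t))
    (fun t ht => hasDerivAt_sub_const_div_sq (hs t ht) (hr t ht) (hr₀ t ht) (h t ht))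
    (fun t ht => sub_div_sq_pos (hr₀ t ht) (h t ht)) (hur.const_mul _)

theorem stmt_14_general {r s u : ℝ → ℝ} {I : Set ℝ} (hI : I.OrdConnected) {t₀ : ℝ}
    (ht₀ : t₀ ∈ I)
    (hs : ∀ t ∈ I, HasDerivAt s (-2 * u t * r t) t)
    (hr : ∀ t ∈ I, HasDerivAt r (-2 * u t * s t) t)
    (hu : ∀ t ∈ I, IntervalIntegrable u volume t₀ t)
    (hsr : ∀ t ∈ I, 0 < r t ∧ r t < s t)
    {C : ℝ} (hC : C = √(s t₀ ^ 2 - r t₀ ^ 2)) :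
    0 < C ∧
    (∀ t ∈ I, s t ^ 2 - r t ^ 2 = C ^ 2) ∧
    (∀ t ∈ I, ((s t - C) / r t) ^ 2 = exp (-2 * arccosh (s t / r t))) ∧
    (∀ t ∈ I, HasDerivAt (fun τ => ((s τ - C) / r τ) ^ 2)
      (-4 * C * (u t / r t) * ((s t - C) / r t) ^ 2) t) ∧
    (∀ t ∈ I, ((s t - C) / r t) ^ 2
      = ((s t₀ - C) / r t₀) ^ 2 * exp (-4 * C * ∫ τ in t₀..t, u τ / r τ)) := by
  have hpos : 0 < s t₀ ^ 2 - r t₀ ^ 2 :=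
    sub_pos.2 (pow_lt_pow_left₀ (hsr t₀ ht₀).2 (hsr t₀ ht₀).1.le two_ne_zero)
  have hC_pos : 0 < C := hC ▸ sqrt_pos.2 hpos
  have hinv : ∀ t ∈ I, s t ^ 2 - r t ^ 2 = C ^ 2 := fun t ht => by
    rw [hC, sq_sqrt hpos.le]
    exact sq_sub_sq_eq_of_hasDerivWithinAt hI.convex (fun τ hτ => (hs τ hτ).hasDerivWithinAt)
      (fun τ hτ => (hr τ hτ).hasDerivWithinAt) ht₀ ht
  have hr₀ : ∀ t ∈ I, r t ≠ 0 := fun t ht => (hsr t ht).1.ne'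
  refine ⟨hC_pos, hinv, fun t ht => ?_, fun t ht => ?_, fun t ht => ?_⟩
  · exact sub_div_sq_eq_exp_neg_two_mul_arccosh (hsr t ht).1 (hsr t ht).2.le hC_pos.le (hinv t ht)
  · exact hasDerivAt_sub_const_div_sq (hs t ht) (hr t ht) (hr₀ t ht) (hinv t ht)
  · have hsub : uIcc t₀ t ⊆ I := hI.uIcc_subset ht₀ ht
    exact sub_div_sq_eq_mul_exp_integral (fun τ hτ => hs τ (hsub hτ)) (fun τ hτ => hr τ (hsub hτ))
      (hu t ht) (fun τ hτ => hr₀ τ (hsub hτ)) (fun τ hτ => hinv τ (hsub hτ))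

/-- modification function for the su(1,1)/Meixner case
(hyperbolic case s² − r² > 0): m(t) = ((s(t) − C)/r(t))² = exp(−2 arccosh(s(t)/r(t)))
satisfies ṁ/m = −4C u/r, i.e. m(t) = m(0) exp(−4C ∫_0^t u/r). -/
theorem stmt_14 (r s u : ℝ → ℝ)
    (hs : ∀ t ∈ Set.Ici (0 : ℝ), HasDerivAt s (-2 * u t * r t) t)
    (hr : ∀ t ∈ Set.Ici (0 : ℝ), HasDerivAt r (-2 * u t * s t) t)
    (hu : ContinuousOn u (Set.Ici (0 : ℝ)))
    (hsr : ∀ t ∈ Set.Ici (0 : ℝ), 0 < r t ∧ r t < s t)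
    (C : ℝ) (hC : C = Real.sqrt (s 0 ^ 2 - r 0 ^ 2)) :
    0 < C ∧
    (∀ t ∈ Set.Ici (0 : ℝ), s t ^ 2 - r t ^ 2 = C ^ 2) ∧
    (∀ t ∈ Set.Ici (0 : ℝ),
      ((s t - C) / r t) ^ 2 = Real.exp (-2 * arccosh (s t / r t))) ∧
    (∀ t ∈ Set.Ici (0 : ℝ),
      HasDerivAt (fun τ => ((s τ - C) / r τ) ^ 2)
        (-4 * C * (u t / r t) * (((s t - C) / r t) ^ 2)) t) ∧
    (∀ t ∈ Set.Ici (0 : ℝ),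
      ((s t - C) / r t) ^ 2
        = ((s 0 - C) / r 0) ^ 2 * Real.exp (-4 * C * ∫ τ in (0 : ℝ)..t, u τ / r τ)) :=
  stmt_14_general ordConnected_Ici self_mem_Ici hs hr
    (fun _ ht => (hu.mono (ordConnected_Ici.uIcc_subset self_mem_Ici ht)).intervalIntegrable) hsr hC
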